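/- There is a constant c (independent of the game) such that every coordination game without bonuses on an unweighted open chain of m cycles, each cycle having n nodes, admits, from every joint strategy, a finite c-improvement path of length at most c·n·m³ (hence ending in a strong equilibrium). -/

import Mathlib

open scoped Classical

namespace CG

/-- Payoff of node `i` in a coordination game on a weighted directed graph
with adjacency `adj` (an edge `j → i` is `adj j i`), edge weights `w`,
bonuses `β`, under the joint strategy `s`. -/
noncomputable def payoff {V M : Type} [Fintype V] (adj : V → V → Prop)
    (w : V → V → ℝ) (β : V → M → ℕ) (s : V → M) (i : V) : ℝ :=
  (∑ j ∈ Finset.univ.filter (fun j => adj j i ∧ s j = s i), w j i) + (β i (s i) : ℝ)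

/-- A joint strategy assigns to every node a colour from its colour set. -/
def Valid {V M : Type} (C : V → Finset M) (s : V → M) : Prop :=
  ∀ i, s i ∈ C i

/-- `s'` is a profitable deviation of the (non-empty) coalition
`K = {i | s i ≠ s' i}` from `s`. -/
def ProfDev {V M : Type} [Fintype V] (adj : V → V → Prop) (w : V → V → ℝ)
    (β : V → M → ℕ) (C : V → Finset M) (s s' : V → M) : Prop :=
  Valid C s' ∧ s ≠ s' ∧
    ∀ i, s i ≠ s' i → payoff adj w β s i < payoff adj w β s' i

/-- A profitable deviation of a single player. -/
def UniDev {V M : Type} [Fintype V] (adj : V → V → Prop) (w : V → V → ℝ)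
    (β : V → M → ℕ) (C : V → Finset M) (s s' : V → M) : Prop :=
  ProfDev adj w β C s s' ∧ ∃ i, ∀ j, j ≠ i → s j = s' j

/-- A Nash equilibrium: no single player has a profitable deviation. -/
def IsNash {V M : Type} [Fintype V] (adj : V → V → Prop) (w : V → V → ℝ)
    (β : V → M → ℕ) (C : V → Finset M) (s : V → M) : Prop :=
  Valid C s ∧ ∀ s', ¬ UniDev adj w β C s s'

/-- A strong equilibrium: no coalition has a profitable deviation. -/
def IsStrong {V M : Type} [Fintype V] (adj : V → V → Prop) (w : V → V → ℝ)
    (β : V → M → ℕ) (C : V → Finset M) (s : V → M) : Prop :=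
  Valid C s ∧ ∀ s', ¬ ProfDev adj w β C s s'

/-- There is a finite improvement path of length `L` starting at `s`
(each step a profitable single-player deviation) ending in a Nash equilibrium. -/
def ImpPath {V M : Type} [Fintype V] (adj : V → V → Prop) (w : V → V → ℝ)
    (β : V → M → ℕ) (C : V → Finset M) (s : V → M) (L : ℕ) : Prop :=
  ∃ σ : ℕ → V → M, σ 0 = s ∧
    (∀ t, t < L → UniDev adj w β C (σ t) (σ (t + 1))) ∧
    IsNash adj w β C (σ L)

/-- There is a finite c-improvement path of length `L` starting at `s`
(each step a profitable coalition deviation) ending in a strong equilibrium. -/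
def CImpPath {V M : Type} [Fintype V] (adj : V → V → Prop) (w : V → V → ℝ)
    (β : V → M → ℕ) (C : V → Finset M) (s : V → M) (L : ℕ) : Prop :=
  ∃ σ : ℕ → V → M, σ 0 = s ∧
    (∀ t, t < L → ProfDev adj w β C (σ t) (σ (t + 1))) ∧
    IsStrong adj w β C (σ L)

/-- Adjacency of the simple cycle `1 → 2 → ⋯ → n → 1` on `Fin n`. -/
def cycAdj (n : ℕ) : Fin n → Fin n → Prop :=
  fun i j => (i.val + 1) % n = j.val

/-- Adjacency of a chain of `m` cycles, each of `n` nodes: `node j i` is the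
`(i+1)`-st node of the `(j+1)`-st cycle (`0`-based indices). -/
def chainAdj {V : Type} (m n : ℕ) (node : ℕ → ℕ → V) : V → V → Prop :=
  fun u v => ∃ j i, j < m ∧ i < n ∧ u = node j i ∧ v = node j ((i + 1) % n)

/-- `node`, `k` describe an open chain of `m ≥ 2` simple cycles, each on `n ≥ 3`
nodes, where consecutive cycles `C_j, C_{j+1}` share exactly the node
`node j 0 = node (j+1) (k j)` (with `1 ≤ k j < n`) and the cycles are
otherwise pairwise disjoint, and every vertex lies on some cycle. -/
def IsOpenChain {V : Type} (m n : ℕ) (node : ℕ → ℕ → V) (k : ℕ → ℕ) : Prop :=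
  2 ≤ m ∧ 3 ≤ n ∧
  (∀ j, j + 1 < m → 1 ≤ k j ∧ k j < n) ∧
  (∀ j, j + 1 < m → node j 0 = node (j + 1) (k j)) ∧
  (∀ j i j' i', j < m → i < n → j' < m → i' < n → node j i = node j' i' →
      (j = j' ∧ i = i') ∨ (j' = j + 1 ∧ i = 0 ∧ i' = k j) ∨
      (j = j' + 1 ∧ i' = 0 ∧ i = k j')) ∧
  (∀ v : V, ∃ j i, j < m ∧ i < n ∧ node j i = v)

/-- As `IsOpenChain`, but additionally the last cycle shares exactly the node
`node (m-1) 0 = node 0 (k (m-1))` with the first one. -/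
def IsClosedChain {V : Type} (m n : ℕ) (node : ℕ → ℕ → V) (k : ℕ → ℕ) : Prop :=
  2 ≤ m ∧ 3 ≤ n ∧
  (∀ j, j < m → 1 ≤ k j ∧ k j < n) ∧
  (∀ j, j + 1 < m → node j 0 = node (j + 1) (k j)) ∧
  node (m - 1) 0 = node 0 (k (m - 1)) ∧
  (∀ j i j' i', j < m → i < n → j' < m → i' < n → node j i = node j' i' →
      (j = j' ∧ i = i') ∨ (j' = j + 1 ∧ i = 0 ∧ i' = k j) ∨
      (j = j' + 1 ∧ i' = 0 ∧ i = k j') ∨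
      (j = m - 1 ∧ j' = 0 ∧ i = 0 ∧ i' = k (m - 1)) ∨
      (j' = m - 1 ∧ j = 0 ∧ i' = 0 ∧ i = k (m - 1))) ∧
  (∀ v : V, ∃ j i, j < m ∧ i < n ∧ node j i = v)

section Chain
variable {V M : Type} {m n : ℕ} {node : ℕ → ℕ → V} {k : ℕ → ℕ} {C : V → Finset M}

def Unst (m n : ℕ) (node : ℕ → ℕ → V) (C : V → Finset M) (s : V → M) (x : V) : Prop :=
  (∀ p, chainAdj m n node p x → s p ≠ s x) ∧ ∃ p, chainAdj m n node p x ∧ s p ∈ C x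

lemma IsOpenChain.inj (h : IsOpenChain m n node k) {j i j' i' : ℕ} (hj : j < m) (hi : i < n)
    (hj' : j' < m) (hi' : i' < n) (e : node j i = node j' i') :
      (j = j' ∧ i = i') ∨ (j' = j + 1 ∧ i = 0 ∧ i' = k j ∧ 1 ≤ i') ∨
      (j = j' + 1 ∧ i' = 0 ∧ i = k j' ∧ 1 ≤ i) := by
  obtain ⟨h2, h3, hk, hl, hinj, hs⟩ := h
  rcases hinj j i j' i' hj hi hj' hi' e with h1 | h1 | h1
  · exact Or.inl h1
  · have := hk j (by omega)
    right; left; omega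
  · have := hk j' (by omega)
    right; right; omega

lemma adj_inner (h : IsOpenChain m n node k) {i l : ℕ} (hi : i < m) (h1 : 1 ≤ l) (hl : l < n)
    (p : V) : chainAdj m n node p (node i l) ↔
      p = node i (l-1) ∨ ∃ i', i = i' + 1 ∧ l = k i' ∧ p = node i' (n-1) := by
  have hn : 3 ≤ n := h.2.1
  constructor
  · rintro ⟨j, r, hj, hr, rfl, e⟩
    have hmod : (r+1) % n < n := Nat.mod_lt _ (by omega)
    have hr' : (r + 1 = n ∧ (r+1)%n = 0) ∨ (r+1)%n = r+1 := by
      rcases Nat.lt_or_ge (r+1) n with h' | h'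
      · right; exact Nat.mod_eq_of_lt h'
      · left
        have : r + 1 = n := by omega
        exact ⟨this, by rw [this]; exact Nat.mod_self n⟩
    rcases h.inj hi hl hj hmod e with ⟨rfl, h2⟩ | h2 | ⟨h2, h3, h4, h5⟩
    · left
      have : r = l - 1 := by omega
      rw [this]
    · omega
    · right
      refine ⟨j, h2, h4, ?_⟩
      have : r = n - 1 := by omega
      rw [this]
  · rintro (rfl | ⟨i', rfl, rfl, rfl⟩)
    · refine ⟨i, l-1, hi, by omega, rfl, ?_⟩
      rw [show l - 1 + 1 = l by omega, Nat.mod_eq_of_lt hl]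
    · refine ⟨i', n-1, by omega, by omega, rfl, ?_⟩
      rw [show n - 1 + 1 = n by omega, Nat.mod_self]
      exact (h.2.2.2.1 i' hi).symm

lemma adj_last (h : IsOpenChain m n node k) 
    (p : V) : chainAdj m n node p (node (m-1) 0) ↔ p = node (m-1) (n-1) := by
  have hn : 3 ≤ n := h.2.1
  have hm : 2 ≤ m := h.1
  constructor
  · rintro ⟨j, r, hj, hr, rfl, e⟩
    have hmod : (r+1) % n < n := Nat.mod_lt _ (by omega)
    have hr' : (r + 1 = n ∧ (r+1)%n = 0) ∨ (r+1)%n = r+1 := by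
      rcases Nat.lt_or_ge (r+1) n with h' | h'
      · right; exact Nat.mod_eq_of_lt h'
      · left
        have : r + 1 = n := by omega
        exact ⟨this, by rw [this]; exact Nat.mod_self n⟩
    rcases h.inj (by omega) (by omega) hj hmod e with ⟨h1, h2⟩ | h2 | ⟨h2, h3, h4, h5⟩
    · have : r = n - 1 := by omega
      rw [this, h1]
    · omega
    · omega
  · rintro rfl
    refine ⟨m-1, n-1, by omega, by omega, rfl, ?_⟩
    rw [show n - 1 + 1 = n by omega, Nat.mod_self]

lemma adj_a (h : IsOpenChain m n node k) {i : ℕ} (hi : i < m) :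
    chainAdj m n node (node i (n-1)) (node i 0) := by
  have hn : 3 ≤ n := h.2.1
  refine ⟨i, n-1, by omega, by omega, rfl, ?_⟩
  rw [show n - 1 + 1 = n by omega, Nat.mod_self]

/-- Every node is inner or the last. -/
lemma node_cases (h : IsOpenChain m n node k) (x : V) :
    (∃ i l, i < m ∧ 1 ≤ l ∧ l < n ∧ x = node i l) ∨ x = node (m-1) 0 := by
  obtain ⟨i, l, hi, hl, rfl⟩ := h.2.2.2.2.2 x
  by_cases h0 : l = 0
  · subst h0
    by_cases h1 : i + 1 < m
    · left
      have := h.2.2.1 i h1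
      exact ⟨i+1, k i, h1, this.1, this.2, h.2.2.2.1 i h1⟩
    · right
      have : i = m - 1 := by omega
      rw [this]
  · left; exact ⟨i, l, hi, by omega, hl, rfl⟩

lemma adj_two (h : IsOpenChain m n node k) (x : V) :
    ∃ p q, ∀ y, chainAdj m n node y x → y = p ∨ y = q := by
  rcases node_cases h x with ⟨i, l, hi, h1, hl, rfl⟩ | rfl
  · refine ⟨node i (l-1), node (i-1) (n-1), fun y hy => ?_⟩
    rcases (adj_inner h hi h1 hl y).1 hy with h2 | ⟨i', rfl, h3, h4⟩
    · exact Or.inl h2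
    · right; simpa using h4
  · exact ⟨node (m-1) (n-1), node (m-1) (n-1), fun y hy => Or.inl ((adj_last h y).1 hy)⟩

lemma adj_ne (h : IsOpenChain m n node k) {p x : V} (hp : chainAdj m n node p x) : p ≠ x := by
  have hn : 3 ≤ n := h.2.1
  rintro rfl
  obtain ⟨j, r, hj, hr, rfl, e⟩ := hp
  have hmod : (r+1) % n < n := Nat.mod_lt _ (by omega)
  rcases h.inj hj hr hj hmod e with ⟨h1, h2⟩ | h2 | h2
  · rcases Nat.lt_or_ge (r+1) n with h' | h'
    · rw [Nat.mod_eq_of_lt h'] at h2; omega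
    · have : r + 1 = n := by omega
      rw [this, Nat.mod_self] at h2; omega
  · omega
  · omega

lemma unst_congr {s s' : V → M} {x : V} (hx : s x = s' x)
    (hp : ∀ p, chainAdj m n node p x → s p = s' p) (hu : Unst m n node C s' x) :
    Unst m n node C s x := by
  refine ⟨fun p hpx => ?_, ?_⟩
  · rw [hx, hp p hpx]; exact hu.1 p hpx
  · obtain ⟨p, h1, h2⟩ := hu.2
    exact ⟨p, h1, by rw [hp p h1]; exact h2⟩

noncomputable def upd (m n : ℕ) (node : ℕ → ℕ → V) (C : V → Finset M) (s : V → M) (x : V) : V → M :=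
  if h : Unst m n node C s x then
    Function.update s x
      (if h2 : ∃ i, i < m ∧ x = node i 0 ∧ s (node i (n-1)) ∈ C x then s (node h2.choose (n-1))
        else s h.2.choose)
  else s

lemma upd_ne {s : V → M} {x y : V} (hy : y ≠ x) : upd m n node C s x y = s y := by
  unfold upd
  split_ifs <;> simp [Function.update_of_ne hy]

lemma upd_stable {s : V → M} {x : V} (hu : ¬ Unst m n node C s x) : upd m n node C s x = s := by
  unfold upd
  rw [dif_neg hu]

lemma upd_spec (h : IsOpenChain m n node k) {s : V → M} {x : V} (hu : Unst m n node C s x) :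
    upd m n node C s x x ∈ C x ∧ ∃ p, chainAdj m n node p x ∧ s p = upd m n node C s x x := by
  unfold upd
  rw [dif_pos hu]
  simp only [Function.update_self]
  split_ifs with h2
  · have h3 := h2.choose_spec
    refine ⟨h3.2.2, node h2.choose (n-1), ?_, rfl⟩
    have := adj_a h h3.1
    rw [← h3.2.1] at this
    exact this
  · exact ⟨hu.2.choose_spec.2, _, hu.2.choose_spec.1, rfl⟩

lemma upd_pref (h : IsOpenChain m n node k) {s : V → M} {i : ℕ} (hi : i < m)
    (hu : Unst m n node C s (node i 0)) (hc : s (node i (n-1)) ∈ C (node i 0)) :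
    upd m n node C s (node i 0) (node i 0) = s (node i (n-1)) := by
  have hn : 3 ≤ n := h.2.1
  unfold upd
  rw [dif_pos hu]
  simp only [Function.update_self]
  have h2 : ∃ i', i' < m ∧ node i 0 = node i' 0 ∧ s (node i' (n-1)) ∈ C (node i 0) :=
    ⟨i, hi, rfl, hc⟩
  rw [dif_pos h2]
  have h3 := h2.choose_spec
  rcases h.inj hi (by omega) h3.1 (by omega) h3.2.1 with h4 | h4 | h4
  · rw [← h4.1]
  · omega
  · omega

lemma upd_changed (h : IsOpenChain m n node k) {s : V → M} {x : V} (hu : Unst m n node C s x) :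
    upd m n node C s x x ≠ s x := by
  obtain ⟨-, p, hp, e⟩ := upd_spec h hu
  rw [← e]; exact hu.1 p hp

lemma upd_not_unst (h : IsOpenChain m n node k) {s : V → M} {x : V} :
    ¬ Unst m n node C (upd m n node C s x) x := by
  by_cases hu : Unst m n node C s x
  · obtain ⟨-, p, hp, e⟩ := upd_spec h hu
    intro h2
    exact h2.1 p hp (by rw [upd_ne (adj_ne h hp), e])
  · rw [upd_stable hu]; exact hu

variable [Fintype V]

noncomputable def pc (m n : ℕ) (node : ℕ → ℕ → V) (s : V → M) (x : V) : ℕ :=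
  (Finset.univ.filter (fun p => chainAdj m n node p x ∧ s p = s x)).card

abbrev Dev (m n : ℕ) (node : ℕ → ℕ → V) (C : V → Finset M) (s s' : V → M) : Prop :=
  ProfDev (chainAdj m n node) (fun _ _ => 1) (fun _ _ => 0) C s s'

lemma payoff_eq (s : V → M) (x : V) :
    payoff (chainAdj m n node) (fun _ _ => 1) (fun _ _ => 0) s x = (pc m n node s x : ℝ) := by
  simp [payoff, pc]

lemma dev_iff {s s' : V → M} : Dev m n node C s s' ↔ Valid C s' ∧ s ≠ s' ∧
    ∀ i, s i ≠ s' i → pc m n node s i < pc m n node s' i := by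
  simp only [Dev, ProfDev, payoff_eq, Nat.cast_lt]

lemma upd_dev (h : IsOpenChain m n node k) {s : V → M} {x : V} (hv : Valid C s)
    (hu : Unst m n node C s x) : Dev m n node C s (upd m n node C s x) := by
  rw [dev_iff]
  obtain ⟨hc, p, hp, e⟩ := upd_spec h hu
  refine ⟨fun i => ?_, fun e => upd_changed h hu (congrFun e x).symm, fun i hi => ?_⟩
  · by_cases hix : i = x
    · rw [hix]; exact hc
    · rw [upd_ne hix]; exact hv i
  · have hix : i = x := by
      by_contra hix
      exact hi (upd_ne hix).symm
    subst hix
    have h0 : pc m n node s i = 0 := by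
      unfold pc
      rw [Finset.card_eq_zero, Finset.filter_eq_empty_iff]
      rintro q - ⟨hq, e⟩
      exact hu.1 q hq e
    rw [h0]
    apply Finset.card_pos.2
    exact ⟨p, by simp only [Finset.mem_filter, Finset.mem_univ, true_and]; exact ⟨hp, by rw [upd_ne (adj_ne h hp), e]⟩⟩

inductive Steps (m n : ℕ) (node : ℕ → ℕ → V) (C : V → Finset M) : ℕ → (V → M) → (V → M) → Prop
  | refl (s) : Steps m n node C 0 s s
  | tail {N s s' s''} : Steps m n node C N s s' → Dev m n node C s' s'' →
      Steps m n node C (N+1) s s''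

lemma Steps.trans {N N' : ℕ} {s s' s'' : V → M} (h1 : Steps m n node C N s s')
    (h2 : Steps m n node C N' s' s'') : Steps m n node C (N+N') s s'' := by
  induction h2 with
  | refl => exact h1
  | tail a b ih => exact (ih h1).tail b

lemma Steps.valid {N : ℕ} {s s' : V → M} (h1 : Steps m n node C N s s') (hv : Valid C s) :
    Valid C s' := by
  cases h1 with
  | refl => exact hv
  | tail a b => exact b.1

lemma Steps.path {N : ℕ} {s s' : V → M} (h1 : Steps m n node C N s s') :
    ∃ σ : ℕ → V → M, σ 0 = s ∧ (∀ t, t < N → Dev m n node C (σ t) (σ (t+1))) ∧ σ N = s' := by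
  induction h1 with
  | refl s => exact ⟨fun _ => s, rfl, fun t ht => absurd ht (Nat.not_lt_zero t), rfl⟩
  | @tail N s s' s'' a b ih =>
    obtain ⟨σ, h0, hs, hN⟩ := ih
    refine ⟨fun t => if t ≤ N then σ t else s'', by simp [h0], fun t ht => ?_, by simp⟩
    by_cases h : t < N
    · simp only [show t ≤ N by omega, show t + 1 ≤ N by omega, if_true]; exact hs t h
    · have : t = N := by omega
      subst this
      simpa [hN] using b

def Mono (n : ℕ) (node : ℕ → ℕ → V) (s : V → M) (i : ℕ) : Prop :=
  ∀ l, l < n → s (node i l) = s (node i 0)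

/-- Preds in two-element sets: payoff two means all predecessors agree. -/
lemma two_all (h : IsOpenChain m n node k) {s : V → M} {x : V} (h2 : 2 ≤ pc m n node s x) {y : V}
    (hy : chainAdj m n node y x) : s y = s x := by
  obtain ⟨p, q, hpq⟩ := adj_two h x
  obtain ⟨a, b, ha, hb, hab⟩ := Finset.one_lt_card_iff.1 (show 1 < pc m n node s x from h2)
  simp only [Finset.mem_filter, Finset.mem_univ, true_and] at ha hb
  rcases hpq a ha.1 with rfl | rfl <;> rcases hpq b hb.1 with rfl | rfl <;>
    rcases hpq y hy with rfl | rfl <;> first | exact absurd rfl hab | exact ha.2 | exact hb.2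

lemma pc_pos {s : V → M} {x y : V} (hy : chainAdj m n node y x) (e : s y = s x) :
    1 ≤ pc m n node s x :=
  Finset.card_pos.2 ⟨y, by simp [hy, e]⟩

lemma dev_mono (h : IsOpenChain m n node k) {s s' : V → M} (hd : Dev m n node C s s') {i : ℕ}
    (hi : i < m) (hm : Mono n node s i) : ∀ l, l < n → s' (node i l) = s (node i l) := by
  rw [dev_iff] at hd
  obtain ⟨hv, hne, hp⟩ := hd
  have hn : 3 ≤ n := h.2.1
  -- one step back
  have back : ∀ l, l < n → s (node i l) ≠ s' (node i l) → ∀ l', l' < n → (l'+1) % n = l →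
      s (node i l') ≠ s' (node i l') ∧ 2 ≤ pc m n node s' (node i l) := by
    intro l hl hc l' hl' e
    have ha : chainAdj m n node (node i l') (node i l) := ⟨i, l', hi, hl', rfl, by rw [e]⟩
    have hs : s (node i l') = s (node i l) := by rw [hm l hl, hm l' hl']
    have h1 := pc_pos ha hs
    have h2 := hp _ hc
    have h3 := two_all h (show 2 ≤ pc m n node s' (node i l) by omega) ha
    refine ⟨?_, by omega⟩
    rw [hs, h3]; exact hc
  -- down to zero
  have down : ∀ l, l < n → s (node i l) ≠ s' (node i l) → s (node i 0) ≠ s' (node i 0) := by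
    intro l
    induction l with
    | zero => intro _ h; exact h
    | succ l ih =>
      intro hl hc
      exact ih (by omega) (back (l+1) hl hc l (by omega) (Nat.mod_eq_of_lt hl)).1
  have all : s (node i 0) ≠ s' (node i 0) → ∀ r, r < n → s (node i (n-1-r)) ≠ s' (node i (n-1-r)) := by
    intro h0 r
    induction r with
    | zero =>
      intro _
      refine (back 0 (by omega) h0 (n-1) (by omega) ?_).1
      rw [show n - 1 + 1 = n by omega, Nat.mod_self]
    | succ r ih =>
      intro hr
      refine (back _ (by omega) (ih (by omega)) (n-1-(r+1)) (by omega) ?_).1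
      rw [Nat.mod_eq_of_lt (by omega)]; omega
  intro l hl
  by_contra hc
  have h0 := all (down l hl (Ne.symm hc))
  -- a non-link node
  obtain ⟨l0, hl0, hl0n, hlk⟩ : ∃ l0, 1 ≤ l0 ∧ l0 < n ∧ ∀ i', i = i' + 1 → l0 ≠ k i' := by
    by_cases h1 : ∃ i', i = i' + 1 ∧ 1 = k i'
    · obtain ⟨i', rfl, e⟩ := h1
      refine ⟨2, by omega, by omega, ?_⟩
      intro i'' e2
      obtain rfl : i' = i'' := by omega
      omega
    · exact ⟨1, le_rfl, by omega, fun i' e e2 => h1 ⟨i', e, e2⟩⟩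
  have hc0 : s (node i l0) ≠ s' (node i l0) := by
    have := h0 (n-1-l0) (by omega)
    rwa [show n-1-(n-1-l0) = l0 by omega] at this
  have h2 := (back l0 hl0n hc0 (l0-1) (by omega)
    (by rw [Nat.mod_eq_of_lt (by omega)]; omega)).2
  obtain ⟨a, b, ha, hb, hab⟩ := Finset.one_lt_card_iff.1 (show 1 < pc m n node s' (node i l0) from h2)
  simp only [Finset.mem_filter, Finset.mem_univ, true_and] at ha hb
  have key : ∀ y, chainAdj m n node y (node i l0) → y = node i (l0-1) := by
    intro y hy
    rcases (adj_inner h hi hl0 hl0n y).1 hy with h5 | ⟨i', h5, h6, _⟩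
    · exact h5
    · exact absurd h6 (hlk i' h5)
  exact hab ((key a ha.1).trans (key b hb.1).symm)

lemma Steps.mono (h : IsOpenChain m n node k) {N : ℕ} {s s' : V → M}
    (hd : Steps m n node C N s s') {i : ℕ}
    (hi : i < m) (hm : Mono n node s i) : ∀ l, l < n → s' (node i l) = s (node i l) := by
  induction hd with
  | refl => intro l hl; rfl
  | tail a b ih =>
    have ih := ih hm
    intro l hl
    have hm' := dev_mono h b hi (fun l hl => by rw [ih l hl, ih 0 (by omega), hm l hl])
    rw [hm' l hl, ih l hl]

/-- A profitable coalition deviation from a unilaterally stable state creates a new mono cycle. -/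
lemma dev_new (h : IsOpenChain m n node k) {s s' : V → M} (hd : Dev m n node C s s')
    (hs : ∀ x, ¬ Unst m n node C s x) : ∃ i, i < m ∧ ¬ Mono n node s i ∧ Mono n node s' i := by
  have hd0 := hd
  rw [dev_iff] at hd
  obtain ⟨hv, hne, hp⟩ := hd
  have hn : 3 ≤ n := h.2.1
  have hm2 : 2 ≤ m := h.1
  -- every member has a supporting predecessor inside
  have sup : ∀ x, s x ≠ s' x → ∃ p, chainAdj m n node p x ∧ s p ≠ s' p ∧ s' p = s' x := by
    intro x hx
    by_contra hcon
    push Not at hcon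
    have hlt := hp x hx
    obtain ⟨p, hpm⟩ := Finset.card_pos.1 (show 0 < pc m n node s' x by omega)
    simp only [Finset.mem_filter, Finset.mem_univ, true_and] at hpm
    have hps : s p = s' p := by
      by_contra h2
      exact hcon p hpm.1 h2 hpm.2
    have : ∃ q, chainAdj m n node q x ∧ s q = s x := by
      by_contra h3
      push Not at h3
      exact hs x ⟨h3, p, hpm.1, by rw [hps, hpm.2]; exact hv x⟩
    obtain ⟨q, hq, hqe⟩ := this
    have h1 := pc_pos hq hqe
    have h2 := two_all h (show 2 ≤ pc m n node s' x by omega) hq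
    exact hcon q hq (by rw [hqe, h2]; exact hx) h2
  suffices hall : ∃ i, i < m ∧ ∀ l, l < n → s (node i l) ≠ s' (node i l) ∧
      s' (node i l) = s' (node i 0) by
    obtain ⟨i, hi, hl⟩ := hall
    refine ⟨i, hi, fun hm => ?_, fun l hln => (hl l hln).2⟩
    exact (hl 0 (by omega)).1 (dev_mono h hd0 hi hm 0 (by omega)).symm
  by_contra hcon
  push Not at hcon
  -- descending along a cycle
  have desc : ∀ i, i < m → (∀ i', i = i' + 1 → s (node i' 0) ≠ s' (node i' 0) →
      ¬ (s (node i' (n-1)) ≠ s' (node i' (n-1)) ∧ s' (node i' (n-1)) = s' (node i' 0))) →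
      ∀ l, l < n → s (node i l) ≠ s' (node i l) → 
      ∀ r, r ≤ l → s (node i r) ≠ s' (node i r) ∧ s' (node i r) = s' (node i l) := by
    intro i hi hpre l
    induction l with
    | zero =>
      intro _ h0 r hr
      obtain rfl : r = 0 := by omega
      exact ⟨h0, rfl⟩
    | succ l ih =>
      intro hl hc r hr
      have step : s (node i l) ≠ s' (node i l) ∧ s' (node i l) = s' (node i (l+1)) := by
        obtain ⟨p, hpa, hpc, hpe⟩ := sup _ hc
        rcases (adj_inner h hi (by omega) hl p).1 hpa with h5 | ⟨i', h5, h6, h7⟩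
        · simp only [Nat.add_sub_cancel] at h5
          subst h5
          exact ⟨hpc, hpe⟩
        · subst h5
          have e : node i' 0 = node (i'+1) (l+1) := by rw [h6]; exact h.2.2.2.1 i' hi
          exfalso
          apply hpre i' rfl
          · rw [e]; exact hc
          · rw [e, ← h7]; exact ⟨hpc, hpe⟩
      rcases Nat.lt_or_ge l r with h8 | h8
      · obtain rfl : r = l + 1 := by omega
        exact ⟨hc, rfl⟩
      · have := ih (by omega) step.1 r h8
        exact ⟨this.1, this.2.trans step.2⟩
  have claim : ∀ i, i < m → s (node i 0) ≠ s' (node i 0) →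
      ¬ (s (node i (n-1)) ≠ s' (node i (n-1)) ∧ s' (node i (n-1)) = s' (node i 0)) := by
    intro i
    induction i with
    | zero =>
      intro hi h0 h1
      obtain ⟨l, hl, h2⟩ := hcon 0 hi
      have h3 := desc 0 hi (fun i' e => by omega) (n-1) (by omega) h1.1 l (by omega)
      exact h2 h3.1 (h3.2.trans h1.2)
    | succ i ih =>
      intro hi h0 h1
      obtain ⟨l, hl, h2⟩ := hcon (i+1) hi
      have h3 := desc (i+1) hi (fun i' e => by
        obtain rfl : i = i' := by omega
        exact ih (by omega)) (n-1) (by omega) h1.1 l (by omega)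
      exact h2 h3.1 (h3.2.trans h1.2)
  have up : ∀ r i, i < m → i + r = m - 1 → ¬ s (node i 0) ≠ s' (node i 0) := by
    intro r
    induction r with
    | zero =>
      intro i hi e hc
      obtain rfl : i = m - 1 := by omega
      obtain ⟨p, hpa, hpc, hpe⟩ := sup _ hc
      rw [adj_last h] at hpa
      subst hpa
      exact claim _ hi hc ⟨hpc, hpe⟩
    | succ r ih =>
      intro i hi e hc
      have hi1 : i + 1 < m := by omega
      have hk := h.2.2.1 i hi1
      have hc' := hc
      rw [h.2.2.2.1 i hi1] at hc'
      exact ih (i+1) hi1 (by omega) (desc (i+1) hi1 (fun i' e => by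
        obtain rfl : i = i' := by omega
        exact claim i hi) (k i) hk.2 hc' 0 (by omega)).1
  obtain ⟨x, hx⟩ := Function.ne_iff.1 hne
  obtain ⟨i, l, hi, hl, rfl⟩ := h.2.2.2.2.2 x
  exact up (m-1-i) i hi (by omega) (desc i hi (fun i' e => claim i' (by omega)) l hl hx 0 (by omega)).1

noncomputable def sw (m n : ℕ) (node : ℕ → ℕ → V) (C : V → Finset M) (s : V → M) (i l0 : ℕ) :
    ℕ → V → M
  | 0 => s
  | t+1 => upd m n node C (sw m n node C s i l0 t) (node i (l0+t))

lemma sw_ne {s : V → M} {i l0 : ℕ} {y : V} : ∀ t, (∀ l, l0 ≤ l → l < l0 + t → y ≠ node i l) →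
    sw m n node C s i l0 t y = s y := by
  intro t
  induction t with
  | zero => intro _; rfl
  | succ t ih =>
    intro hy
    rw [sw, upd_ne (hy (l0+t) (by omega) (by omega))]
    exact ih (fun l h1 h2 => hy l h1 (by omega))

lemma sw_steps (h : IsOpenChain m n node k) {s : V → M} (hv : Valid C s) {i l0 : ℕ} : ∀ t,
    ∃ N, N ≤ t ∧ Steps m n node C N s (sw m n node C s i l0 t) := by
  intro t
  induction t with
  | zero => exact ⟨0, le_rfl, Steps.refl s⟩
  | succ t ih =>
    obtain ⟨N, hN, hs⟩ := ih
    rw [sw]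
    by_cases hu : Unst m n node C (sw m n node C s i l0 t) (node i (l0+t))
    · exact ⟨N+1, by omega, hs.tail (upd_dev h (hs.valid hv) hu)⟩
    · rw [upd_stable hu]; exact ⟨N, by omega, hs⟩

lemma inner_ne (h : IsOpenChain m n node k) {i l l' : ℕ} (hi : i < m) (hl : l < n)
    (hl' : l' < n) (hne : l ≠ l') : node i l ≠ node i l' := by
  intro e
  rcases h.inj hi hl hi hl' e with h1 | h1 | h1 <;> omega

lemma a_ne (h : IsOpenChain m n node k) {i' l : ℕ} (hi : i' + 1 < m) (h1 : 1 ≤ l) (hl : l < n) :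
    node i' (n-1) ≠ node (i'+1) l := by
  have hn : 3 ≤ n := h.2.1
  intro e
  rcases h.inj (by omega) (by omega) hi hl e with h1 | h1 | h1 <;> omega

lemma sw_stable (h : IsOpenChain m n node k) {s : V → M} {i l0 : ℕ} (hi : i < m) (h0 : 1 ≤ l0) :
    ∀ t, l0 + t ≤ n → ∀ l, l0 ≤ l → l < l0 + t →
      ¬ Unst m n node C (sw m n node C s i l0 t) (node i l) := by
  intro t
  induction t with
  | zero => intro _ l h1 h2; omega
  | succ t ih =>
    intro ht l h1 h2 hu
    rw [sw] at hu
    by_cases hlt : l = l0 + t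
    · subst hlt; exact upd_not_unst h hu
    · refine ih (by omega) l h1 (by omega) (unst_congr ?_ ?_ hu)
      · rw [upd_ne (inner_ne h hi (by omega) (by omega) hlt)]
      · intro p hp
        rcases (adj_inner h hi (by omega) (by omega) p).1 hp with rfl | ⟨i', rfl, h5, rfl⟩
        · rw [upd_ne (inner_ne h hi (by omega) (by omega) (by omega))]
        · rw [upd_ne (a_ne h hi (by omega) (by omega))]

/-- Full sweep of cycle `i` from position `l0`. -/
noncomputable def fs (m n : ℕ) (node : ℕ → ℕ → V) (C : V → Finset M) (s : V → M) (i l0 : ℕ) :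
    V → M := sw m n node C s i l0 (n - l0)

lemma fs_ne {s : V → M} {i l0 : ℕ} {y : V} (hy : ∀ l, l0 ≤ l → l < n → y ≠ node i l) :
    fs m n node C s i l0 y = s y :=
  sw_ne _ (fun l h1 h2 => hy l h1 (by omega))

lemma fs_steps (h : IsOpenChain m n node k) {s : V → M} (hv : Valid C s) (i l0 : ℕ) :
    ∃ N, N ≤ n ∧ Steps m n node C N s (fs m n node C s i l0) := by
  obtain ⟨N, hN, hs⟩ := sw_steps h hv (i := i) (l0 := l0) (n - l0)
  exact ⟨N, by omega, hs⟩

lemma fs_stable (h : IsOpenChain m n node k) {s : V → M} {i l0 : ℕ} (hi : i < m) (h0 : 1 ≤ l0)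
    {l : ℕ} (h1 : l0 ≤ l) (h2 : l < n) :
      ¬ Unst m n node C (fs m n node C s i l0) (node i l) :=
  sw_stable h hi h0 _ (by omega) l h1 (by omega)

lemma fs_changed (h : IsOpenChain m n node k) {s : V → M} {i l0 : ℕ} (hi : i < m) (h0 : 1 ≤ l0)
    {l : ℕ} (h1 : l0 ≤ l) (h2 : l < n) (hc : fs m n node C s i l0 (node i l) ≠ s (node i l)) :
    ∃ u : V → M, Unst m n node C u (node i l) ∧ u (node i l) = s (node i l) ∧
      u (node i (l-1)) = fs m n node C s i l0 (node i (l-1)) ∧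
      (∀ i', i = i' + 1 → u (node i' (n-1)) = s (node i' (n-1))) ∧
      fs m n node C s i l0 (node i l) = upd m n node C u (node i l) (node i l) := by
  have later : ∀ d, l0 + (l - l0) + d ≤ n → ∀ r, r < l0 + (l - l0) → 
      sw m n node C s i l0 (l - l0 + d) (node i r) = sw m n node C s i l0 (l - l0) (node i r) := by
    intro d
    induction d with
    | zero => intro _ r _; rfl
    | succ d ih =>
      intro hd r hr
      rw [← add_assoc, sw, upd_ne (inner_ne h hi (by omega) (by omega) (by omega)), ih (by omega) r hr]
  have later' : ∀ d, l0 + (l - l0) + 1 + d ≤ n → 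
      sw m n node C s i l0 (l - l0 + 1 + d) (node i l) =
        sw m n node C s i l0 (l - l0 + 1) (node i l) := by
    intro d
    induction d with
    | zero => intro _; rfl
    | succ d ih =>
      intro hd
      rw [← add_assoc, sw, upd_ne (inner_ne h hi (by omega) (by omega) (by omega)), ih (by omega)]
  have e1 : fs m n node C s i l0 (node i l) = upd m n node C (sw m n node C s i l0 (l - l0)) (node i l) (node i l) := by
    have := later' (n - l - 1) (by omega)
    rw [show l - l0 + 1 + (n - l - 1) = n - l0 by omega] at this
    rw [fs, this, sw, show l0 + (l - l0) = l by omega]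
  have e2 : sw m n node C s i l0 (l - l0) (node i l) = s (node i l) :=
    sw_ne _ (fun r h3 h4 => inner_ne h hi (by omega) (by omega) (by omega))
  refine ⟨sw m n node C s i l0 (l - l0), ?_, e2, ?_, ?_, e1⟩
  · by_contra hu
    rw [e1, upd_stable hu, e2] at hc
    exact hc rfl
  · have := later (n - l) (by omega) (l-1) (by omega)
    rw [show l - l0 + (n - l) = n - l0 by omega] at this
    rw [fs, this]
  · rintro i' rfl
    exact sw_ne _ (fun r h3 h4 => a_ne h hi (by omega) (by omega))

def Bad (n : ℕ) (node : ℕ → ℕ → V) (C : V → Finset M) (s : V → M) (i : ℕ) : Prop :=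
  s (node i (n-1)) ∈ C (node i 0) ∧ s (node i 0) ≠ s (node i (n-1))

lemma fs_not_bad (h : IsOpenChain m n node k) {s : V → M} {i l0 : ℕ} (hi : i + 1 < m)
    (h0 : 1 ≤ l0) (h1 : l0 ≤ k i)
    (hc : fs m n node C s (i+1) l0 (node i 0) ≠ s (node i 0)) :
    ¬ Bad n node C (fs m n node C s (i+1) l0) i := by
  have hk := h.2.2.1 i hi
  have e := h.2.2.2.1 i hi
  rw [e] at hc
  obtain ⟨u, hu, hu1, hu2, hu3, hu4⟩ := fs_changed h hi h0 h1 hk.2 hc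
  have ha : fs m n node C s (i+1) l0 (node i (n-1)) = s (node i (n-1)) :=
    fs_ne (fun r h3 h4 => a_ne h hi (by omega) (by omega))
  rintro ⟨b1, b2⟩
  rw [ha] at b1 b2
  rw [← hu3 i rfl] at b1 b2
  rw [← e] at hu hu4
  apply b2
  rw [hu4]
  exact upd_pref h (by omega) hu b1

/-- A left sweep. -/
lemma left_sweep (h : IsOpenChain m n node k) {s : V → M} {i : ℕ} (hi : i < m)
    (hst : ∀ l, 2 ≤ l → l < n → ¬ Unst m n node C s (node i l))
    (hc : fs m n node C s i 1 (node i (n-1)) ≠ s (node i (n-1))) :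
    Mono n node (fs m n node C s i 1) i ∨
    ∃ i', i = i' + 1 ∧ Bad n node C s i' ∧ ¬ Bad n node C (fs m n node C s i 1) i' := by
  have hn : 3 ≤ n := h.2.1
  by_cases hev : ∃ i', i = i' + 1 ∧ Bad n node C s i' ∧ ¬ Bad n node C (fs m n node C s i 1) i'
  · exact Or.inr hev
  left
  have hv0 : fs m n node C s i 1 (node i 0) = s (node i 0) :=
    fs_ne (fun r h3 h4 => inner_ne h hi (by omega) (by omega) (by omega))
  -- colour copied
  have copy : ∀ l, 1 ≤ l → l < n → fs m n node C s i 1 (node i l) ≠ s (node i l) →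
      fs m n node C s i 1 (node i l) = fs m n node C s i 1 (node i (l-1)) := by
    intro l h1 hl hcl
    obtain ⟨u, hu, hu1, hu2, hu3, hu4⟩ := fs_changed h hi le_rfl h1 hl hcl
    obtain ⟨hmem, p, hp, e⟩ := upd_spec h hu
    rcases (adj_inner h hi h1 hl p).1 hp with rfl | ⟨i', rfl, rfl, rfl⟩
    · rw [hu4, ← e, hu2]
    · exfalso
      have e0 := h.2.2.2.1 i' hi
      apply hev
      refine ⟨i', rfl, ⟨?_, ?_⟩, fs_not_bad h hi le_rfl h1 (by rw [e0]; exact hcl)⟩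
      · rw [← hu3 i' rfl, e0, e]; exact hmem
      · rw [← hu3 i' rfl, e0, ← hu1]
        exact (hu.1 _ hp).symm
  have prev : ∀ l, 2 ≤ l → l < n → fs m n node C s i 1 (node i l) ≠ s (node i l) →
      fs m n node C s i 1 (node i (l-1)) ≠ s (node i (l-1)) := by
    intro l h2 hl hcl e
    obtain ⟨u, hu, hu1, hu2, hu3, hu4⟩ := fs_changed h hi le_rfl (by omega) hl hcl
    refine hst l h2 hl (unst_congr hu1.symm ?_ hu)
    intro p hp
    rcases (adj_inner h hi (by omega) hl p).1 hp with rfl | ⟨i', h5, rfl, rfl⟩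
    · rw [hu2, e]
    · exact (hu3 i' h5).symm
  have all : ∀ r, r + 1 < n → fs m n node C s i 1 (node i (n-1-r)) ≠ s (node i (n-1-r)) := by
    intro r
    induction r with
    | zero => intro _; exact hc
    | succ r ih =>
      intro hr
      have := prev (n-1-r) (by omega) (by omega) (ih (by omega))
      rwa [show n-1-r-1 = n-1-(r+1) by omega] at this
  intro l
  induction l with
  | zero => intro _; rfl
  | succ l ih =>
    intro hl
    have h1 := all (n-1-(l+1)) (by omega)
    rw [show n-1-(n-1-(l+1)) = l+1 by omega] at h1
    have h2 := copy (l+1) (by omega) hl h1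
    rw [Nat.add_sub_cancel] at h2
    rw [h2]; exact ih (by omega)

structure Config (m n : ℕ) (node : ℕ → ℕ → V) (k : ℕ → ℕ) (C : V → Finset M) (s : V → M) (R : ℕ)
    (B : Set ℕ) : Prop where
  c1 : ∀ i, i < m → ∀ l, 1 ≤ l → l < n → Unst m n node C s (node i l) →
    (l = 1 ∧ i < R) ∨ ∃ i', i = i' + 1 ∧ l = k i' ∧ i' ∈ B
  c2 : Unst m n node C s (node (m-1) 0) → m - 1 ∈ B
  c3 : ∀ i ∈ B, i < m ∧ i ≤ R
  c4 : R ≤ m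

noncomputable def wt (m n : ℕ) (node : ℕ → ℕ → V) (C : V → Finset M) (s : V → M) (B : Set ℕ) (i : ℕ) : ℕ :=
  if Bad n node C s i ∨ i ∈ B then m - i else 0

noncomputable def Psi (m n : ℕ) (node : ℕ → ℕ → V) (C : V → Finset M) (s : V → M) (B : Set ℕ) : ℕ :=
  ∑ i ∈ Finset.range (m+1), wt m n node C s B i

lemma sum_shift (g g' : ℕ → ℕ) (m i : ℕ) (hi : i < m) (h1 : ∀ j, j ≠ i → j ≠ i + 1 → g' j ≤ g j)
    (h2 : g' i = 0) (h3 : g' (i+1) + 1 ≤ g i) :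
    ∑ j ∈ Finset.range (m+1), g' j + 1 ≤ ∑ j ∈ Finset.range (m+1), g j := by
  have hm1 : i ∈ Finset.range (m+1) := by simp; omega
  have hm2 : i + 1 ∈ (Finset.range (m+1)).erase i := by simp; omega
  rw [← Finset.add_sum_erase _ g hm1, ← Finset.add_sum_erase _ g' hm1,
    ← Finset.add_sum_erase _ g hm2, ← Finset.add_sum_erase _ g' hm2]
  have : ∑ x ∈ ((Finset.range (m + 1)).erase i).erase (i + 1), g' x ≤
      ∑ x ∈ ((Finset.range (m + 1)).erase i).erase (i + 1), g x := by
    apply Finset.sum_le_sum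
    intro j hj
    simp only [Finset.mem_erase] at hj
    exact h1 j hj.2.1 hj.1
  omega

lemma wt_le (s : V → M) (B : Set ℕ) (i : ℕ) : wt m n node C s B i ≤ m - i := by
  unfold wt; split_ifs <;> omega

lemma wt_mono {s s' : V → M} {B B' : Set ℕ} {i : ℕ}
    (h : Bad n node C s' i ∨ i ∈ B' → Bad n node C s i ∨ i ∈ B) :
    wt m n node C s' B' i ≤ wt m n node C s B i := by
  unfold wt
  by_cases h1 : Bad n node C s' i ∨ i ∈ B'
  · rw [if_pos h1, if_pos (h h1)]
  · rw [if_neg h1]; exact Nat.zero_le _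

lemma bad_congr {s s' : V → M} {i : ℕ} (h1 : s' (node i 0) = s (node i 0))
    (h2 : s' (node i (n-1)) = s (node i (n-1))) (hb : Bad n node C s' i) : Bad n node C s i := by
  unfold Bad at *
  rwa [h1, h2] at hb

/-- Effect of a sweep on the other nodes. -/
lemma fs_unst (h : IsOpenChain m n node k) {s : V → M} {i l0 : ℕ} (hi : i < m) (h0 : 1 ≤ l0)
    {j l : ℕ} (hj : j < m) (h1 : 1 ≤ l) (hl : l < n)
    (hu : Unst m n node C (fs m n node C s i l0) (node j l)) :
    ¬ (j = i ∧ l0 ≤ l) ∧ (Unst m n node C s (node j l) ∨ (l = 1 ∧ i = j + 1) ∨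
      (j = i + 1 ∧ l = k i ∧ fs m n node C s i l0 (node i (n-1)) ≠ s (node i (n-1)))) := by
  have hn : 3 ≤ n := h.2.1
  have hns : ¬ (j = i ∧ l0 ≤ l) := by
    rintro ⟨rfl, h2⟩
    exact fs_stable h hi h0 h2 hl hu
  refine ⟨hns, ?_⟩
  by_contra hcon
  push Not at hcon
  obtain ⟨hA, hB, hD⟩ := hcon
  apply hA
  refine unst_congr ?_ ?_ hu
  · symm; apply fs_ne
    intro r h3 h4 e
    rcases h.inj hj hl hi h4 e with h5 | h5 | h5 <;> omega
  · intro p hp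
    rcases (adj_inner h hj h1 hl p).1 hp with rfl | ⟨j', rfl, rfl, rfl⟩
    · symm; apply fs_ne
      intro r h3 h4 e
      rcases h.inj hj (by omega) hi h4 e with h5 | h5 | h5 <;> omega
    · by_cases hji : j' = i
      · subst hji
        exact (hD rfl rfl).symm
      · symm; apply fs_ne
        intro r h3 h4 e
        rcases h.inj (by omega) (by omega) hi h4 e with h5 | h5 | h5 <;> omega

lemma fs_last (h : IsOpenChain m n node k) {s : V → M} {i l0 : ℕ} (hi : i < m) (h0 : 1 ≤ l0)
    (hu : Unst m n node C (fs m n node C s i l0) (node (m-1) 0)) :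
    Unst m n node C s (node (m-1) 0) ∨
      (i = m-1 ∧ fs m n node C s i l0 (node i (n-1)) ≠ s (node i (n-1))) := by
  have hn : 3 ≤ n := h.2.1
  have hm : 2 ≤ m := h.1
  by_contra hcon
  push Not at hcon
  apply hcon.1
  refine unst_congr ?_ ?_ hu
  · symm; apply fs_ne
    intro r h3 h4 e
    rcases h.inj (by omega) (by omega) hi h4 e with h5 | h5 | h5 <;> omega
  · intro p hp
    rw [adj_last h] at hp
    subst hp
    by_cases him : i = m - 1
    · have := hcon.2 him
      rw [him] at this ⊢
      exact this.symm
    · symm; apply fs_ne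
      intro r h3 h4 e
      rcases h.inj (by omega) (by omega) hi h4 e with h5 | h5 | h5 <;> omega

lemma fs_v (h : IsOpenChain m n node k) {s : V → M} {i l0 : ℕ} (hi : i < m) (h0 : 1 ≤ l0)
    {j : ℕ} (hj : j < m) (hne : i ≠ j + 1) : fs m n node C s i l0 (node j 0) = s (node j 0) := by
  have hn : 3 ≤ n := h.2.1
  apply fs_ne
  intro r h3 h4 e
  rcases h.inj hj (by omega) hi h4 e with h5 | h5 | h5 <;> omega

lemma fs_a (h : IsOpenChain m n node k) {s : V → M} {i l0 : ℕ} (hi : i < m) (h0 : 1 ≤ l0)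
    {j : ℕ} (hj : j < m) (hne : i ≠ j) : fs m n node C s i l0 (node j (n-1)) = s (node j (n-1)) := by
  have hn : 3 ≤ n := h.2.1
  apply fs_ne
  intro r h3 h4 e
  rcases h.inj hj (by omega) hi h4 e with h5 | h5 | h5 <;> omega

def Prog (m n : ℕ) (node : ℕ → ℕ → V) (s s' : V → M) : Prop :=
  ∃ i, i < m ∧ ¬ Mono n node s i ∧ Mono n node s' i

lemma Prog.of_steps (h : IsOpenChain m n node k) {s s' s'' : V → M} {N : ℕ}
    (h1 : Steps m n node C N s s') (h2 : Prog m n node s' s'') : Prog m n node s s'' := by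
  have hn : 3 ≤ n := h.2.1
  obtain ⟨i, hi, h3, h4⟩ := h2
  refine ⟨i, hi, fun hm => h3 ?_, h4⟩
  have := h1.mono h hi hm
  intro l hl
  rw [this l hl, this 0 (by omega), hm l hl]

/-- Bubble step. -/
lemma bubble (h : IsOpenChain m n node k) {s : V → M} (hv : Valid C s) {R : ℕ} {B : Set ℕ}
    (hc : Config m n node k C s R B) {i : ℕ} (hiB : i ∈ B) (hu : Unst m n node C s (node i 0)) :
    ∃ N s' R' B', N ≤ n ∧ Steps m n node C N s s' ∧ Config m n node k C s' R' B' ∧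
      R' ≤ R + 1 ∧ Psi m n node C s' B' + 1 ≤ Psi m n node C s B := by
  have hn : 3 ≤ n := h.2.1
  have hm : 2 ≤ m := h.1
  obtain ⟨him, hiR⟩ := hc.c3 i hiB
  have hwi : wt m n node C s B i = m - i := by
    unfold wt; rw [if_pos (Or.inr hiB)]
  by_cases hlast : i + 1 < m
  · have hk := h.2.2.1 i hlast
    have e0 := h.2.2.2.1 i hlast
    obtain ⟨N, hN, hst⟩ := fs_steps h hv (i+1) (k i)
    have hchg : fs m n node C s (i+1) (k i) (node i 0) ≠ s (node i 0) := by
      intro e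
      have hns := fs_stable (C := C) (s := s) h hlast hk.1 le_rfl hk.2
      apply hns
      rw [e0] at e hu
      refine unst_congr e ?_ hu
      intro p hp
      rcases (adj_inner h hlast hk.1 hk.2 p).1 hp with rfl | ⟨i', h5, h6, rfl⟩
      · exact fs_ne (fun r h3 h4 => inner_ne h hlast (by omega) (by omega) (by omega))
      · exact fs_a h hlast hk.1 (by omega) (by omega)
    have hnb := fs_not_bad h hlast hk.1 le_rfl hchg
    refine ⟨N, _, max R (i+1), insert (i+1) (B \ {i}), hN, hst, ⟨?_, ?_, ?_, ?_⟩, ?_, ?_⟩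
    · intro j hj l h1 hl hu'
      obtain ⟨hA, hB⟩ := fs_unst h hlast hk.1 hj h1 hl hu'
      rcases hB with hB | hB | hB
      · rcases hc.c1 j hj l h1 hl hB with h5 | ⟨i', rfl, rfl, h7⟩
        · left; exact ⟨h5.1, lt_of_lt_of_le h5.2 (le_max_left _ _)⟩
        · right
          refine ⟨i', rfl, rfl, Or.inr ⟨h7, ?_⟩⟩
          rintro rfl
          exact hA ⟨rfl, le_rfl⟩
      · left
        refine ⟨hB.1, lt_of_lt_of_le ?_ (le_max_right _ _)⟩
        omega
      · right
        exact ⟨i+1, hB.1, hB.2.1, Or.inl rfl⟩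
    · intro hu'
      rcases fs_last h hlast hk.1 hu' with h5 | h5
      · refine Or.inr ⟨hc.c2 h5, ?_⟩
        intro h6
        have : m - 1 = i := h6
        omega
      · left; omega
    · rintro j (rfl | ⟨hj, -⟩)
      · exact ⟨hlast, le_max_right _ _⟩
      · have := hc.c3 j hj
        exact ⟨this.1, le_trans this.2 (le_max_left _ _)⟩
    · exact max_le hc.c4 (by omega)
    · exact max_le (by omega) (by omega)
    · apply sum_shift _ _ _ i him
      · intro j hji hji1
        by_cases hjm : j < m
        · apply wt_mono
          rintro (hb | (hb | hb))
          · left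
            exact bad_congr (fs_v h hlast hk.1 hjm (by omega)) (fs_a h hlast hk.1 hjm (by omega)) hb
          · exact absurd hb hji1
          · exact Or.inr hb.1
        · refine le_trans (wt_le _ _ _) ?_
          omega
      · unfold wt
        rw [if_neg]
        rintro (hb | (hb | hb))
        · exact hnb hb
        · have : i = i + 1 := hb
          omega
        · exact hb.2 rfl
      · rw [hwi]
        have := wt_le (m := m) (n := n) (node := node) (C := C) (fs m n node C s (i+1) (k i)) (insert (i+1) (B \ {i})) (i+1)
        omega
  · obtain rfl : i = m - 1 := by omega
    have hsp := upd_spec h hu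
    obtain ⟨hmem, p, hp, e⟩ := hsp
    rw [adj_last h] at hp
    subst hp
    refine ⟨1, upd m n node C s (node (m-1) 0), m, B \ {m-1}, by omega,
      (Steps.refl s).tail (upd_dev h hv hu), ⟨?_, ?_, ?_, le_rfl⟩, by omega, ?_⟩
    · intro j hj l h1 hl hu'
      by_cases hl1 : l = 1
      · left; exact ⟨hl1, hj⟩
      · right
        have : Unst m n node C s (node j l) := by
          refine unst_congr ?_ ?_ hu'
          · rw [upd_ne]
            intro e
            rcases h.inj hj hl him (by omega) e with h5 | h5 | h5 <;> omega
          · intro p hp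
            rw [upd_ne]
            rcases (adj_inner h hj h1 hl p).1 hp with rfl | ⟨j', rfl, rfl, rfl⟩
            · intro e
              rcases h.inj hj (by omega) him (by omega) e with h5 | h5 | h5 <;> omega
            · intro e
              rcases h.inj (by omega) (by omega) him (by omega) e with h5 | h5 | h5 <;> omega
        rcases hc.c1 j hj l h1 hl this with h5 | ⟨i', rfl, rfl, h7⟩
        · omega
        · refine ⟨i', rfl, rfl, h7, ?_⟩
          intro h8
          have : i' = m - 1 := h8
          omega
    · intro hu'
      exact absurd hu' (upd_not_unst h)
    · rintro j ⟨hj, -⟩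
      have := hc.c3 j hj
      exact ⟨this.1, by omega⟩
    · apply sum_shift _ _ _ (m-1) him
      · intro j hji hji1
        by_cases hjm : j < m
        · apply wt_mono
          rintro (hb | hb)
          · left
            refine bad_congr (upd_ne ?_) (upd_ne ?_) hb
            · intro e
              rcases h.inj hjm (by omega) him (by omega) e with h5 | h5 | h5 <;> omega
            · intro e
              rcases h.inj hjm (by omega) him (by omega) e with h5 | h5 | h5 <;> omega
          · exact Or.inr hb.1
        · refine le_trans (wt_le _ _ _) ?_
          omega
      · unfold wt
        rw [if_neg]
        rintro (hb | hb)
        · apply hb.2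
          rw [← e, upd_ne]
          intro e
          rcases h.inj him (by omega) him (by omega) e with h5 | h5 | h5 <;> omega
        · exact hb.2 rfl
      · rw [hwi]
        have := wt_le (m := m) (n := n) (node := node) (C := C) (upd m n node C s (node (m-1) 0)) (B \ {m-1}) (m-1+1)
        omega

/-- Left step. -/
lemma left_step (h : IsOpenChain m n node k) {s : V → M} (hv : Valid C s) {R : ℕ}
    (hc : Config m n node k C s (R+1) ∅) :
    ∃ N s', N ≤ n ∧ Steps m n node C N s s' ∧ (Prog m n node s s' ∨ 
      ∃ B', Config m n node k C s' R B' ∧ Psi m n node C s' B' ≤ Psi m n node C s ∅) := by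
  have hn : 3 ≤ n := h.2.1
  have hm : 2 ≤ m := h.1
  have hR : R < m := hc.c4
  obtain ⟨N, hN, hst⟩ := fs_steps h hv R 1
  refine ⟨N, _, hN, hst, ?_⟩
  have hstab : ∀ l, 2 ≤ l → l < n → ¬ Unst m n node C s (node R l) := by
    intro l h2 hl hu
    rcases hc.c1 R hR l (by omega) hl hu with h5 | ⟨i', _, _, h6⟩
    · omega
    · exact h6
  have conf : ∀ B' : Set ℕ, (∀ j ∈ B', j = R) →
      (fs m n node C s R 1 (node R (n-1)) ≠ s (node R (n-1)) → R ∈ B') →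
      Config m n node k C (fs m n node C s R 1) R B' := by
    intro B' hB1 hB2
    refine ⟨?_, ?_, ?_, by omega⟩
    · intro j hj l h1 hl hu'
      obtain ⟨hA, hB⟩ := fs_unst h hR le_rfl hj h1 hl hu'
      rcases hB with hB | hB | hB
      · rcases hc.c1 j hj l h1 hl hB with h5 | ⟨i', _, _, h7⟩
        · left; omega
        · exact absurd h7 (Set.notMem_empty _)
      · left; omega
      · right; exact ⟨R, hB.1, hB.2.1, hB2 hB.2.2⟩
    · intro hu'
      rcases fs_last h hR le_rfl hu' with h5 | h5
      · exact absurd (hc.c2 h5) (Set.notMem_empty _)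
      · rw [← h5.1]; exact hB2 h5.2
    · intro j hj
      have := hB1 j hj
      omega
  by_cases hch : fs m n node C s R 1 (node R (n-1)) ≠ s (node R (n-1))
  · rcases left_sweep h hR hstab hch with hmono | ⟨i', rfl, hb, hnb⟩
    · left
      exact ⟨R, hR, fun hmo => hch (hst.mono h hR hmo (n-1) (by omega)), hmono⟩
    · right
      refine ⟨{i'+1}, conf _ (fun j hj => hj) (fun _ => rfl), ?_⟩
      refine le_trans (Nat.le_succ _) (sum_shift _ _ _ i' (by omega) ?_ ?_ ?_)
      · intro j hji hji1
        by_cases hjm : j < m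
        · apply wt_mono
          rintro (hb | hb)
          · left
            exact bad_congr (fs_v h hR le_rfl hjm (by omega)) (fs_a h hR le_rfl hjm (by omega)) hb
          · exact absurd hb hji1
        · refine le_trans (wt_le _ _ _) ?_
          omega
      · unfold wt
        rw [if_neg]
        rintro (hb | hb)
        · exact hnb hb
        · have : i' = i' + 1 := hb
          omega
      · have h1 := wt_le (m := m) (n := n) (node := node) (C := C) (fs m n node C s (i'+1) 1) {i'+1} (i'+1)
        have h2 : wt m n node C s ∅ i' = m - i' := by
          unfold wt; rw [if_pos (Or.inl hb)]
        omega
  · right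
    refine ⟨∅, conf _ (fun j hj => absurd hj (Set.notMem_empty _)) (fun h5 => absurd h5 hch), ?_⟩
    push Not at hch
    apply Finset.sum_le_sum
    intro j hj
    by_cases hjm : j < m
    · apply wt_mono
      rintro (hb | hb)
      · left
        by_cases hvc : fs m n node C s R 1 (node j 0) = s (node j 0)
        · refine bad_congr hvc ?_ hb
          by_cases hjR : R = j
          · subst hjR; exact hch
          · exact fs_a h hR le_rfl hjm hjR
        · exfalso
          have hRj : R = j + 1 := by
            by_contra hne
            exact hvc (fs_v h hR le_rfl hjm hne)
          subst hRj
          exact fs_not_bad h hR le_rfl (h.2.2.1 j hR).1 hvc hb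
      · exact absurd hb (Set.notMem_empty _)
    · refine le_trans (wt_le _ _ _) ?_
      omega

lemma macro_run (h : IsOpenChain m n node k) : ∀ μ : ℕ, ∀ (s : V → M), Valid C s → ∀ R (B : Set ℕ),
    Config m n node k C s R B → R + 2 * Psi m n node C s B ≤ μ → 
    ∃ N s', N ≤ n * μ ∧ Steps m n node C N s s' ∧
      (Prog m n node s s' ∨ ∀ x, ¬ Unst m n node C s' x) := by
  intro μ
  induction μ with
  | zero => 
    intro s hv R B hc hμ
    obtain rfl : R = 0 := by omega
    have hP : Psi m n node C s B = 0 := by omega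
    have hB : B = ∅ := by
      rw [Set.eq_empty_iff_forall_notMem]
      intro i hi
      have := (Finset.sum_eq_zero_iff.1 hP) i (by have := hc.c3 i hi; simp; omega)
      have hh : wt m n node C s B i = m - i := by
        unfold wt; rw [if_pos (Or.inr hi)]
      have := hc.c3 i hi
      omega
    refine ⟨0, s, by omega, Steps.refl s, Or.inr ?_⟩
    intro x hu
    rcases node_cases h x with ⟨i, l, hi, h1, hl, rfl⟩ | rfl
    · rcases hc.c1 i hi l h1 hl hu with h5 | ⟨i', _, _, h6⟩
      · omega
      · rw [hB] at h6; exact h6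
    · have := hc.c2 hu
      rw [hB] at this; exact this
  | succ μ ih =>
    intro s hv R B hc hμ
    by_cases hex : ∃ i ∈ B, Unst m n node C s (node i 0)
    · obtain ⟨i, hi, hu⟩ := hex
      obtain ⟨N, s', R', B', hN, hst, hc', hR', hP'⟩ := bubble h hv hc hi hu
      obtain ⟨N2, s2, hN2, hst2, hres⟩ := ih s' (hst.valid hv) R' B' hc' (by omega)
      refine ⟨N + N2, s2, by rw [Nat.mul_succ]; omega, hst.trans hst2, ?_⟩
      rcases hres with h1 | h1
      · exact Or.inl (Prog.of_steps h hst h1)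
      · exact Or.inr h1
    · have hc0 : Config m n node k C s R ∅ := by
        refine ⟨?_, ?_, fun i hi => absurd hi (Set.notMem_empty _), hc.c4⟩
        · intro i hi l h1 hl hu
          rcases hc.c1 i hi l h1 hl hu with h5 | ⟨i', rfl, rfl, h7⟩
          · exact Or.inl h5
          · exfalso
            apply hex
            refine ⟨i', h7, ?_⟩
            rw [h.2.2.2.1 i' hi]; exact hu
        · intro hu
          exact absurd ⟨m-1, hc.c2 hu, hu⟩ hex
      have hP0 : Psi m n node C s ∅ ≤ Psi m n node C s B := by
        apply Finset.sum_le_sum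
        intro j _
        apply wt_mono
        rintro (hb | hb)
        · exact Or.inl hb
        · exact absurd hb (Set.notMem_empty _)
      rcases R with _ | R
      · refine ⟨0, s, by omega, Steps.refl s, Or.inr ?_⟩
        intro x hu
        rcases node_cases h x with ⟨i, l, hi, h1, hl, rfl⟩ | rfl
        · rcases hc0.c1 i hi l h1 hl hu with h5 | ⟨i', _, _, h6⟩
          · omega
          · exact h6
        · exact hc0.c2 hu
      · obtain ⟨N, s', hN, hst, hres⟩ := left_step h hv hc0
        rcases hres with h1 | ⟨B', hc', hP'⟩
        · exact ⟨N, s', by rw [Nat.mul_succ]; omega, hst, Or.inl h1⟩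
        · obtain ⟨N2, s2, hN2, hst2, hres⟩ := ih s' (hst.valid hv) R B' hc' (by omega)
          refine ⟨N + N2, s2, by rw [Nat.mul_succ]; omega, hst.trans hst2, ?_⟩
          rcases hres with h1 | h1
          · exact Or.inl (Prog.of_steps h hst h1)
          · exact Or.inr h1

lemma init_sweep (h : IsOpenChain m n node k) {s : V → M} (hv : Valid C s) : ∀ T, T ≤ m →
    ∃ N s', N ≤ n * T ∧ Steps m n node C N s s' ∧ ∀ i, i < T → ∀ l, 1 ≤ l → l < n →
      Unst m n node C s' (node i l) → l = 1 ∨ ∃ i', i = i' + 1 ∧ l = k i' := by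
  intro T
  induction T with
  | zero => intro _; exact ⟨0, s, by omega, Steps.refl s, fun i hi => by omega⟩
  | succ T ih =>
    intro hT
    obtain ⟨N, s', hN, hst, hs⟩ := ih (by omega)
    obtain ⟨N2, hN2, hst2⟩ := fs_steps h (hst.valid hv) T 1
    refine ⟨N + N2, _, by rw [Nat.mul_succ]; omega, hst.trans hst2, ?_⟩
    intro i hi l h1 hl hu
    obtain ⟨hA, hB⟩ := fs_unst h (show T < m by omega) le_rfl (by omega) h1 hl hu
    rcases hB with hB | hB | hB
    · exact hs i (by omega) l h1 hl hB
    · exact Or.inl hB.1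
    · exact Or.inr ⟨T, hB.1, hB.2.1⟩

lemma epoch (h : IsOpenChain m n node k) {s : V → M} (hv : Valid C s) :
    ∃ N s', N ≤ 7 * n * m^2 ∧ Steps m n node C N s s' ∧
      (Prog m n node s s' ∨ IsStrong (chainAdj m n node) (fun _ _ => 1) (fun _ _ => 0) C s') := by
  have hn : 3 ≤ n := h.2.1
  have hm : 2 ≤ m := h.1
  obtain ⟨N, s', hN, hst, hs⟩ := init_sweep h hv m le_rfl
  have hc : Config m n node k C s' m {i | i < m} := by
    refine ⟨?_, ?_, ?_, le_rfl⟩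
    · intro i hi l h1 hl hu
      rcases hs i hi l h1 hl hu with h5 | ⟨i', rfl, rfl⟩
      · exact Or.inl ⟨h5, hi⟩
      · exact Or.inr ⟨i', rfl, rfl, show i' < m by omega⟩
    · intro _
      show m - 1 < m
      omega
    · intro i hi
      have : i < m := hi
      omega
  have hP : Psi m n node C s' {i | i < m} ≤ (m+1) * m := by
    unfold Psi
    calc _ ≤ ∑ i ∈ Finset.range (m+1), m :=
          Finset.sum_le_sum (fun i _ => le_trans (wt_le _ _ _) (Nat.sub_le _ _))
      _ = (m+1) * m := by simp
  obtain ⟨N2, s2, hN2, hst2, hres⟩ := macro_run h _ s' (hst.valid hv) _ _ hc le_rfl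
  have hst3 := hst.trans hst2
  have hb : N + N2 + 1 ≤ 7 * n * m^2 := by
    have h1 : N2 ≤ n * (m + 2 * ((m+1)*m)) :=
      le_trans hN2 (Nat.mul_le_mul_left _ (by omega))
    have h2 : 2 * (n * m) ≤ n * m * m := by nlinarith [Nat.zero_le (n*m)]
    have h3 : 1 ≤ n * m := Nat.mul_pos (by omega) (by omega)
    nlinarith
  rcases hres with h1 | h1
  · exact ⟨N + N2, s2, by omega, hst3, Or.inl (Prog.of_steps h hst h1)⟩
  · by_cases hstr : IsStrong (chainAdj m n node) (fun _ _ => 1) (fun _ _ => 0) C s2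
    · exact ⟨N + N2, s2, by omega, hst3, Or.inr hstr⟩
    · have : ∃ s3, Dev m n node C s2 s3 := by
        by_contra hcon
        push Not at hcon
        exact hstr ⟨hst3.valid hv, hcon⟩
      obtain ⟨s3, hd⟩ := this
      exact ⟨N + N2 + 1, s3, hb, hst3.tail hd, Or.inl (Prog.of_steps h hst3 (dev_new h hd h1))⟩

lemma whole (h : IsOpenChain m n node k) : ∀ d (s : V → M), Valid C s →
    ((Finset.range m).filter (fun i => ¬ Mono n node s i)).card ≤ d →
    ∃ N s', N ≤ 7 * n * m^2 * (d+1) ∧ Steps m n node C N s s' ∧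
      IsStrong (chainAdj m n node) (fun _ _ => 1) (fun _ _ => 0) C s' := by
  have hn : 3 ≤ n := h.2.1
  intro d
  induction d with
  | zero =>
    intro s hv hd
    obtain ⟨N, s', hN, hst, hres⟩ := epoch h hv
    rcases hres with ⟨i, hi, h1, h2⟩ | h1
    · exfalso
      have := Finset.card_eq_zero.1 (Nat.le_zero.1 hd)
      have h3 : i ∈ (Finset.range m).filter (fun i => ¬ Mono n node s i) := by simp [hi, h1]
      rw [this] at h3
      exact absurd h3 (Finset.notMem_empty _)
    · exact ⟨N, s', by omega, hst, h1⟩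
  | succ d ih =>
    intro s hv hd
    obtain ⟨N, s', hN, hst, hres⟩ := epoch h hv
    rcases hres with ⟨i, hi, h1, h2⟩ | h1
    · have hlt : ((Finset.range m).filter (fun i => ¬ Mono n node s' i)).card <
          ((Finset.range m).filter (fun i => ¬ Mono n node s i)).card := by
        apply Finset.card_lt_card
        rw [Finset.ssubset_iff_of_subset]
        · exact ⟨i, by simp [hi, h1], by simp [h2]⟩
        · intro j hj
          simp only [Finset.mem_filter, Finset.mem_range] at hj ⊢
          refine ⟨hj.1, fun hm => hj.2 ?_⟩
          have := hst.mono h hj.1 hm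
          intro l hl
          rw [this l hl, this 0 (by omega), hm l hl]
      obtain ⟨N2, s2, hN2, hst2, hres⟩ := ih s' (hst.valid hv) (by omega)
      refine ⟨N + N2, s2, ?_, hst.trans hst2, hres⟩
      rw [Nat.mul_succ]; omega
    · exact ⟨N, s', le_trans hN (Nat.le_mul_of_pos_right _ (by omega)), hst, h1⟩

end Chain


/-- There is a constant `c` such that every coordination game without bonuses
on an unweighted open chain of `m` cycles, each cycle having `n` nodes,
admits, from every joint strategy, a finite c-improvement path of length at
most `c * n * m ^ 3` ending in a strong equilibrium. -/
theorem open_chain_cimprovement_path :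
    ∃ c : ℕ,
      ∀ (V : Type) [Fintype V] (M : Type) [Fintype M],
      ∀ (m n : ℕ) (node : ℕ → ℕ → V) (k : ℕ → ℕ),
        IsOpenChain m n node k →
      ∀ (C : V → Finset M), (∀ i, (C i).Nonempty) →
      ∀ s : V → M, Valid C s →
        ∃ L, L ≤ c * n * m ^ 3 ∧
          CImpPath (chainAdj m n node) (fun _ _ => 1) (fun _ _ => 0) C s L := by
  refine ⟨14, ?_⟩
  intro V _ M _ m n node k h C _ s hv
  have hm : 2 ≤ m := h.1
  obtain ⟨N, s', hN, hst, hstr⟩ := whole h m s hv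
    (le_trans (Finset.card_filter_le _ _) (by simp))
  obtain ⟨σ, h0, h1, h2⟩ := hst.path
  refine ⟨N, le_trans hN ?_, σ, h0, h1, by rw [h2]; exact hstr⟩
  calc 7 * n * m^2 * (m+1) ≤ 7 * n * m^2 * (2 * m) := Nat.mul_le_mul_left _ (by omega)
    _ = 14 * n * m^3 := by ring

end CG
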